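/- arXiv:1704.04288 — 2 statements merged into one kernel-verified Lean document; each statement's English description precedes it below -/
import Mathlib

section
/- For every integer k ≥ 1, the maximum number of separated pairs among permutations of length 2k+1 satisfies τ(2k+1) = k + τ(k). -/
/-- `(v+1, v)` (0-based values) is a separated pair of `π`. -/
def IsSepPair {n : ℕ} (π : Equiv.Perm (Fin n)) (v : Fin n) : Prop :=
  ∃ p q r : Fin n, p < q ∧ q < r ∧
    (π p : ℕ) = (v : ℕ) + 1 ∧ (v : ℕ) + 1 < (π q : ℕ) ∧ π r = v

/-- number of separated pairs of `π`. -/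
noncomputable def sep {n : ℕ} (π : Equiv.Perm (Fin n)) : ℕ :=
  {v : Fin n | IsSepPair π v}.ncard

/-- `tau n` is the maximum of `sep` over all permutations of length `n`. -/
noncomputable def tau (n : ℕ) : ℕ :=
  Finset.univ.sup fun π : Equiv.Perm (Fin n) => sep π

/-!
Cut the values `0, …, 2k` of a permutation of length `2k + 1` into the `k + 1` smallest and the `k`
largest. Whether `(v + 1, v)` is separated for a large `v` depends only on the pattern of the large
entries, so at most `τ(k)` of these pairs are. The `k + 1` pairs with small `v` cannot all be
separated: the values `k + 1, k, …, 0` would then occur from left to right with a separating entry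
in each of the `k + 1` gaps, and as these separating entries would all exceed `k + 1`, only `k - 1`
values would be left for them. Both bounds are attained together by interleaving the decreasing
sequence `k, …, 0` with an optimal permutation of the large values.
-/

open Equiv

section TopPattern

variable {a m : ℕ}

/-- `σ` is the pattern of the `m` largest entries of `π`: read from left to right, at the positions
enumerated by the increasing map `f`, these entries are the values of `σ` raised by `a`. -/
def IsTopPattern (σ : Perm (Fin m)) (π : Perm (Fin (a + m))) : Prop :=
  ∃ f : Fin m → Fin (a + m), StrictMono f ∧ ∀ i, π (f i) = Fin.natAdd a (σ i)

lemma exists_isTopPattern (π : Perm (Fin (a + m))) : ∃ σ : Perm (Fin m), IsTopPattern σ π := by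
  let S : Finset (Fin (a + m)) :=
    Finset.univ.map ((Fin.natAddEmb a).trans π.symm.toEmbedding)
  have card_S : S.card = m := by simp [S]
  let f := S.orderEmbOfFin card_S
  have large (i : Fin m) : ∃ w, π (f i) = Fin.natAdd a w := by
    obtain ⟨w, -, hw⟩ := Finset.mem_map.1 (S.orderEmbOfFin_mem card_S i)
    exact ⟨w, (π.symm_apply_eq.1 hw).symm⟩
  choose g hg using large
  have g_injective : Function.Injective g := fun i j hij =>
    f.injective (π.injective (by rw [hg, hg, hij]))
  exact ⟨ofBijective g (Finite.injective_iff_bijective.1 g_injective), f, f.strictMono, hg⟩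

lemma IsTopPattern.isSepPair_natAdd_iff {σ : Perm (Fin m)} {π : Perm (Fin (a + m))}
    (h : IsTopPattern σ π) (v : Fin m) : IsSepPair π (Fin.natAdd a v) ↔ IsSepPair σ v := by
  obtain ⟨f, f_strictMono, hf⟩ := h
  have val_hf (i : Fin m) : (π (f i) : ℕ) = a + σ i := by simp [hf]
  have exists_of_large (p : Fin (a + m)) (hp : a ≤ π p) : ∃ i, f i = p := by
    refine ⟨σ.symm ⟨π p - a, by omega⟩, π.injective (Fin.ext ?_)⟩
    rw [val_hf, σ.apply_symm_apply]
    exact Nat.add_sub_cancel' hp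
  constructor
  · rintro ⟨p, q, r, hpq, hqr, hp, hq, hr⟩
    rw [Fin.val_natAdd] at hp hq
    obtain ⟨i, rfl⟩ := exists_of_large p (by omega)
    obtain ⟨j, rfl⟩ := exists_of_large q (by omega)
    obtain ⟨l, rfl⟩ := exists_of_large r (by simp [hr])
    rw [val_hf] at hp hq
    rw [hf] at hr
    exact ⟨i, j, l, f_strictMono.lt_iff_lt.1 hpq, f_strictMono.lt_iff_lt.1 hqr, by omega, by omega,
      Fin.natAdd_injective _ _ hr⟩
  · rintro ⟨i, j, l, hij, hjl, hi, hj, hl⟩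
    refine ⟨f i, f j, f l, f_strictMono hij, f_strictMono hjl, ?_, ?_, by rw [hf, hl]⟩ <;>
      rw [val_hf, Fin.val_natAdd] <;> omega

lemma IsTopPattern.sep_eq {σ : Perm (Fin m)} {π : Perm (Fin (a + m))} (h : IsTopPattern σ π) :
    sep π = {v : Fin a | IsSepPair π (v.castAdd m)}.ncard + sep σ := by
  classical
  simp only [sep, Set.ncard_eq_toFinset_card', Set.toFinset_ofPred, Finset.card_filter,
    Fin.sum_univ_add, h.isSepPair_natAdd_iff]

end TopPattern

lemma sep_le_tau {n : ℕ} (π : Perm (Fin n)) : sep π ≤ tau n :=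
  Finset.le_sup (f := fun π : Perm (Fin n) => sep π) (Finset.mem_univ π)

lemma exists_sep_eq_tau (n : ℕ) : ∃ π : Perm (Fin n), sep π = tau n := by
  obtain ⟨π, -, hπ⟩ := Finset.exists_mem_eq_sup Finset.univ Finset.univ_nonempty
    fun π : Perm (Fin n) => sep π
  exact ⟨π, hπ.symm⟩

section UpperBound

variable {k m : ℕ}

lemma exists_strictAnti_of_forall_isSepPair {π : Perm (Fin (k + 1 + m))}
    (h : ∀ v : Fin (k + 1), IsSepPair π (v.castAdd m)) :
    ∃ q : Fin (k + 1) → Fin (k + 1 + m), StrictAnti q ∧ ∀ v, k + 1 < (π (q v) : ℕ) := by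
  choose p q r hpq hqr hp hq hr using h
  have hr' (v : Fin (k + 1)) : (π (r v) : ℕ) = v := by simp [hr]
  simp only [Fin.val_castAdd] at hp hq
  have q_strictAnti : StrictAnti q := by
    refine Fin.strictAnti_iff_succ_lt.2 fun v => ?_
    have r_succ : r v.succ = p v.castSucc :=
      π.injective (Fin.ext (by simp [hr', hp]))
    exact (hqr v.succ).trans (r_succ ▸ hpq v.castSucc)
  refine ⟨q, q_strictAnti, fun v => ?_⟩
  -- A separating entry of value `w + 1 ≤ k + 1` would itself start the pair `w > v`, yet that pair
  -- lies to the left of the gap of `v`.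
  by_contra! small
  let w : Fin (k + 1) := ⟨π (q v) - 1, by omega⟩
  have v_lt_w : v < w := Fin.lt_def.2 (by have := hq v; simp only [w]; omega)
  have q_eq : q v = p w :=
    π.injective (Fin.ext (by have := hq v; simp only [hp, w]; omega))
  exact lt_asymm (q_strictAnti v_lt_w) (q_eq ▸ hpq w)

lemma add_two_le_of_forall_isSepPair {π : Perm (Fin (k + 1 + m))}
    (h : ∀ v : Fin (k + 1), IsSepPair π (v.castAdd m)) : k + 2 ≤ m := by
  obtain ⟨q, q_strictAnti, large⟩ := exists_strictAnti_of_forall_isSepPair h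
  have card_le : (Finset.univ : Finset (Fin (k + 1))).card ≤
      (Finset.Ico (k + 2) (k + 1 + m)).card :=
    Finset.card_le_card_of_injOn (fun v => (π (q v) : ℕ))
      (fun v _ => Finset.mem_coe.2 (Finset.mem_Ico.2 ⟨large v, (π (q v)).isLt⟩))
      (Fin.val_injective.comp (π.injective.comp q_strictAnti.injective)).injOn
  rw [Finset.card_fin, Nat.card_Ico] at card_le
  omega

lemma ncard_isSepPair_castAdd_le (hm : m ≤ k + 1) (π : Perm (Fin (k + 1 + m))) :
    {v : Fin (k + 1) | IsSepPair π (v.castAdd m)}.ncard ≤ k := by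
  refine Nat.lt_succ_iff.1 ((Set.ncard_lt_card fun h => ?_).trans_eq (Nat.card_fin _))
  have := add_two_le_of_forall_isSepPair (Set.eq_univ_iff_forall.1 h)
  omega

lemma tau_add_le (hm : m ≤ k + 1) : tau (k + 1 + m) ≤ k + tau m :=
  Finset.sup_le fun π _ => by
    obtain ⟨σ, hσ⟩ := exists_isTopPattern π
    rw [hσ.sep_eq]
    exact add_le_add (ncard_isSepPair_castAdd_le hm π) (sep_le_tau σ)

end UpperBound

section LowerBound

variable {k : ℕ}

/-- The splitting of `2k + 1` positions into the `k + 1` even and the `k` odd ones (counted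
from `0`), each enumerated from left to right. -/
def evenOddEquiv (k : ℕ) : Fin (k + 1) ⊕ Fin k ≃ Fin (k + 1 + k) where
  toFun := Sum.elim (fun i => ⟨2 * i, by omega⟩) fun j => ⟨2 * j + 1, by omega⟩
  invFun i := if h : (i : ℕ) % 2 = 0 then .inl ⟨i / 2, by omega⟩ else .inr ⟨i / 2, by omega⟩
  left_inv := by
    rintro (i | j)
    · simp
    · dsimp only [Sum.elim_inr]
      rw [dif_neg (by omega)]
      exact congrArg Sum.inr (Fin.ext (by dsimp only; omega))
  right_inv i := by
    dsimp only
    split_ifs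
    · ext; rw [Sum.elim_inl]; dsimp only; omega
    · ext; rw [Sum.elim_inr]; dsimp only; omega

lemma val_evenOddEquiv_inl (i : Fin (k + 1)) : (evenOddEquiv k (.inl i) : ℕ) = 2 * i := rfl

lemma val_evenOddEquiv_inr (j : Fin k) : (evenOddEquiv k (.inr j) : ℕ) = 2 * j + 1 := rfl

/-- The permutation of length `2k + 1` with the decreasing sequence `k, …, 0` at the even positions
and `σ`, raised by `k + 1`, at the odd ones; it attains the maximum of `sep` when `σ` does. -/
def interleave (σ : Perm (Fin k)) : Perm (Fin (k + 1 + k)) :=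
  (evenOddEquiv k).symm.trans ((sumCongr Fin.revPerm σ).trans finSumFinEquiv)

lemma interleave_even (σ : Perm (Fin k)) (i : Fin (k + 1)) :
    interleave σ (evenOddEquiv k (.inl i)) = i.rev.castAdd k := by
  simp [interleave]

lemma interleave_odd (σ : Perm (Fin k)) (j : Fin k) :
    interleave σ (evenOddEquiv k (.inr j)) = Fin.natAdd (k + 1) (σ j) := by
  simp [interleave]

lemma isTopPattern_interleave (σ : Perm (Fin k)) : IsTopPattern σ (interleave σ) := by
  refine ⟨fun j => evenOddEquiv k (.inr j), fun i j hij => ?_, interleave_odd σ⟩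
  rw [Fin.lt_def, val_evenOddEquiv_inr, val_evenOddEquiv_inr]
  omega

lemma isSepPair_interleave (σ : Perm (Fin k)) (v : Fin k) :
    IsSepPair (interleave σ) (v.castSucc.castAdd k) := by
  refine ⟨evenOddEquiv k (.inl v.succ.rev), evenOddEquiv k (.inr v.rev),
    evenOddEquiv k (.inl v.castSucc.rev), ?_, ?_, ?_, ?_, ?_⟩
  · rw [Fin.lt_def, val_evenOddEquiv_inl, val_evenOddEquiv_inr, Fin.val_rev, Fin.val_rev,
      Fin.val_succ]
    omega
  · rw [Fin.lt_def, val_evenOddEquiv_inl, val_evenOddEquiv_inr, Fin.val_rev, Fin.val_rev,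
      Fin.val_castSucc]
    omega
  · simp [interleave_even]
  · rw [interleave_odd, Fin.val_natAdd, Fin.val_castAdd, Fin.val_castSucc]
    omega
  · simp [interleave_even]

lemma le_ncard_isSepPair_interleave (σ : Perm (Fin k)) :
    k ≤ {v : Fin (k + 1) | IsSepPair (interleave σ) (v.castAdd k)}.ncard :=
  calc
    k = (Set.range (Fin.castSucc : Fin k → Fin (k + 1))).ncard := by
      rw [← Set.image_univ, Set.ncard_image_of_injective _ (Fin.castSucc_injective k),
        Set.ncard_univ, Nat.card_fin]
    _ ≤ _ := Set.ncard_le_ncard (Set.range_subset_iff.2 (isSepPair_interleave σ))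

lemma add_tau_le (k : ℕ) : k + tau k ≤ tau (k + 1 + k) := by
  obtain ⟨σ, hσ⟩ := exists_sep_eq_tau k
  calc
    k + tau k
        ≤ {v : Fin (k + 1) | IsSepPair (interleave σ) (v.castAdd k)}.ncard + sep σ :=
      add_le_add (le_ncard_isSepPair_interleave σ) hσ.ge
    _ = sep (interleave σ) := (isTopPattern_interleave σ).sep_eq.symm
    _ ≤ tau (k + 1 + k) := sep_le_tau _

end LowerBound

/-- For `k ≥ 1`, `τ(2k+1) = k + τ(k)`. -/
theorem tau_odd (k : ℕ) (hk : 1 ≤ k) : tau (2 * k + 1) = k + tau k := by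
  rw [show 2 * k + 1 = k + 1 + k by omega]
  exact le_antisymm (tau_add_le k.le_succ) (add_tau_le k)
end

section
/- Let σ be a permutation of length m ≥ 1 and τ a permutation of length k ≥ 1, and let π = σ ⊖ τ be their skew sum. If σ(m) = 1 (the last entry of σ is its smallest value), then sep(π) = sep(σ) + sep(τ); otherwise sep(π) = sep(σ) + sep(τ) + 1. -/
/-- skew sum `σ ⊖ τ` of permutations. -/
def ssum {m k : ℕ} (σ : Equiv.Perm (Fin m)) (τ : Equiv.Perm (Fin k)) :
    Equiv.Perm (Fin (m + k)) :=
  finSumFinEquiv.symm.trans ((Equiv.sumCongr σ τ).trans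
    (((Equiv.sumComm (Fin m) (Fin k)).trans finSumFinEquiv).trans
      (finCongr (Nat.add_comm k m))))

/-!
The part of `σ ⊖ τ` coming from `σ`, and likewise the part coming from `τ`, occupies an interval of
positions and an interval of values, so it keeps exactly its own separated pairs. The only pair of
adjacent values not inside one of the two parts consists of the minimum of `σ`, on the left, and the
maximum of `τ`, on the right. An entry separating the two exceeds the minimum of `σ`, hence belongs
to `σ` and comes after that minimum; such an entry exists iff the minimum is not the last entry.
-/

open Function Set

theorem ncard_eq_ncard_preimage_add_ncard_preimage {α β γ : Type*} {f : α → γ} {g : β → γ}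
    (hf : Injective f) (hg : Injective g) (hfg : IsCompl (range f) (range g)) {s : Set γ}
    (hs : s.Finite) : s.ncard = (f ⁻¹' s).ncard + (g ⁻¹' s).ncard := by
  rw [← ncard_image_of_injective _ hf, ← ncard_image_of_injective _ hg,
    image_preimage_eq_inter_range, image_preimage_eq_inter_range, ← hfg.compl_eq, ← sdiff_eq,
    ncard_inter_add_ncard_sdiff_eq_ncard s _ hs]

theorem isCompl_range_addNat_range_castLE (m k : ℕ) :
    IsCompl (range fun i : Fin m ↦ i.addNat k) (range (Fin.castLE (Nat.le_add_left k m))) := by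
  have range_addNat : (range fun i : Fin m ↦ i.addNat k) = {i : Fin (m + k) | k ≤ (i : ℕ)} := by
    ext i
    exact ⟨fun ⟨j, hj⟩ ↦ hj ▸ Fin.le_coe_addNat k j, fun hi ↦ ⟨i.subNat k hi, Fin.addNat_subNat hi⟩⟩
  rw [range_addNat, Fin.range_castLE]
  exact compl_eq_iff_isCompl.mp (by ext; simp)

theorem ordConnected_range_castAdd (m k : ℕ) :
    (range (Fin.castAdd k : Fin m → Fin (m + k))).OrdConnected := by
  rw [show Fin.castAdd k = Fin.castLE (Nat.le_add_right m k) from rfl, Fin.range_castLE]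
  exact ordConnected_Iio.preimage_mono Fin.val_strictMono.monotone

theorem ordConnected_range_natAdd (m k : ℕ) :
    (range (Fin.natAdd m : Fin k → Fin (m + k))).OrdConnected := by
  rw [Fin.range_natAdd]
  exact ordConnected_Ici.preimage_mono Fin.val_strictMono.monotone

section IsSepPair

variable {n N : ℕ} {π : Equiv.Perm (Fin n)} {ρ : Equiv.Perm (Fin N)}

theorem IsSepPair.add_one_lt {v : Fin n} : IsSepPair π v → (v : ℕ) + 1 < n := by
  rintro ⟨p, -, -, -, -, hp, -⟩
  exact hp ▸ (π p).isLt

theorem not_isSepPair_last (π : Equiv.Perm (Fin (n + 1))) : ¬ IsSepPair π (Fin.last n) :=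
  fun h ↦ h.add_one_lt.false

theorem isSepPair_iff_of_interval {f : Fin n → Fin N} (hf : StrictMono f)
    (hrange : (range f).OrdConnected) {c : ℕ} (hval : ∀ i, (ρ (f i) : ℕ) = π i + c) {v : Fin n}
    (hv : (v : ℕ) + 1 < n) {w : Fin N} (hw : (w : ℕ) = v + c) :
    IsSepPair ρ w ↔ IsSepPair π v := by
  constructor
  · rintro ⟨p, q, r, hpq, hqr, hp, hq, hr⟩
    obtain ⟨p, rfl⟩ : p ∈ range f :=
      ⟨π.symm ⟨v + 1, hv⟩, ρ.injective <| Fin.ext <| by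
        rw [hval, π.apply_symm_apply, hp, hw, Nat.add_right_comm]⟩
    obtain ⟨r, rfl⟩ : r ∈ range f :=
      ⟨π.symm v, ρ.injective <| Fin.ext <| by rw [hval, π.apply_symm_apply, hr, hw]⟩
    obtain ⟨q, rfl⟩ : q ∈ range f := hrange.out ⟨p, rfl⟩ ⟨r, rfl⟩ ⟨hpq.le, hqr.le⟩
    rw [Fin.ext_iff, hval] at hr
    rw [hval] at hp hq
    exact ⟨p, q, r, hf.lt_iff_lt.mp hpq, hf.lt_iff_lt.mp hqr, by omega, by omega,
      Fin.ext (by omega)⟩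
  · rintro ⟨p, q, r, hpq, hqr, hp, hq, rfl⟩
    exact ⟨f p, f q, f r, hf hpq, hf hqr, by rw [hval]; omega, by rw [hval]; omega,
      Fin.ext (by rw [hval, hw])⟩

end IsSepPair

section ssum

variable {m k : ℕ}

theorem ssum_castAdd (σ : Equiv.Perm (Fin m)) (τ : Equiv.Perm (Fin k)) (i : Fin m) :
    ssum σ τ (i.castAdd k) = (σ i).addNat k := by
  ext
  simp [ssum, Nat.add_comm]

theorem ssum_natAdd (σ : Equiv.Perm (Fin m)) (τ : Equiv.Perm (Fin k)) (j : Fin k) :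
    ssum σ τ (j.natAdd m) = (τ j).castLE (Nat.le_add_left k m) := by
  ext
  simp [ssum]

theorem isSepPair_ssum_addNat (σ : Equiv.Perm (Fin m)) (τ : Equiv.Perm (Fin k)) (v : Fin m) :
    IsSepPair (ssum σ τ) (v.addNat k) ↔ IsSepPair σ v := by
  by_cases hv : (v : ℕ) + 1 < m
  · exact isSepPair_iff_of_interval (Fin.strictMono_castAdd k) (ordConnected_range_castAdd m k)
      (fun i ↦ congrArg Fin.val (ssum_castAdd σ τ i)) hv (Fin.val_addNat k v)
  · refine iff_of_false (fun h ↦ hv ?_) (fun h ↦ hv h.add_one_lt)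
    have add_one_lt : (v : ℕ) + k + 1 < m + k := h.add_one_lt
    omega

theorem isSepPair_ssum_castLE_of_lt (σ : Equiv.Perm (Fin m)) (τ : Equiv.Perm (Fin k)) {v : Fin k}
    (hv : (v : ℕ) + 1 < k) :
    IsSepPair (ssum σ τ) (v.castLE (Nat.le_add_left k m)) ↔ IsSepPair τ v :=
  isSepPair_iff_of_interval (c := 0) (Fin.strictMono_natAdd m) (ordConnected_range_natAdd m k)
    (fun j ↦ congrArg Fin.val (ssum_natAdd σ τ j)) hv (Fin.val_castLE _ v)

theorem isSepPair_ssum_castLE_last (σ : Equiv.Perm (Fin (m + 1))) (τ : Equiv.Perm (Fin (k + 1))) :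
    IsSepPair (ssum σ τ) ((Fin.last k).castLE (Nat.le_add_left _ _)) ↔ σ (Fin.last m) ≠ 0 := by
  constructor
  · rintro ⟨p, q, -, hpq, -, hp, hq, -⟩ hσ
    have p_eq_last : p = (Fin.last m).castAdd (k + 1) :=
      (ssum σ τ).injective (Fin.ext (by rw [ssum_castAdd, hσ, hp]; simp))
    induction q using Fin.addCases with
    | left q => exact (p_eq_last ▸ hpq).not_ge (Fin.le_last q)
    | right q =>
      rw [ssum_natAdd, Fin.val_castLE, Fin.val_castLE, Fin.val_last] at hq
      omega
  · intro hσ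
    have min_lt_last : σ.symm 0 < Fin.last m :=
      Fin.lt_last_iff_ne_last.mpr fun h ↦ hσ (by rw [← h, σ.apply_symm_apply])
    refine ⟨(σ.symm 0).castAdd _, (Fin.last m).castAdd _, (τ.symm (Fin.last k)).natAdd _,
      min_lt_last, Fin.lt_def.mpr (by simp; omega), ?_, ?_, ?_⟩
    · simp [ssum_castAdd]
    · simpa [ssum_castAdd, Fin.pos_iff_ne_zero] using hσ
    · rw [ssum_natAdd, τ.apply_symm_apply]

theorem isSepPair_ssum_castLE (σ : Equiv.Perm (Fin (m + 1))) (τ : Equiv.Perm (Fin (k + 1)))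
    (v : Fin (k + 1)) :
    IsSepPair (ssum σ τ) (v.castLE (Nat.le_add_left _ _)) ↔
      IsSepPair τ v ∨ v = Fin.last k ∧ σ (Fin.last m) ≠ 0 := by
  obtain rfl | hv := eq_or_ne v (Fin.last k)
  · simp only [isSepPair_ssum_castLE_last, not_isSepPair_last, true_and, false_or]
  · rw [isSepPair_ssum_castLE_of_lt σ τ (Nat.succ_lt_succ (Fin.val_lt_last hv)),
      or_iff_left fun h ↦ hv h.1]

theorem sep_ssum_eq_sep_add_ncard (σ : Equiv.Perm (Fin m)) (τ : Equiv.Perm (Fin k)) :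
    sep (ssum σ τ) =
      sep σ + {v : Fin k | IsSepPair (ssum σ τ) (v.castLE (Nat.le_add_left k m))}.ncard := by
  simp only [sep, ← isSepPair_ssum_addNat σ τ]
  exact ncard_eq_ncard_preimage_add_ncard_preimage (Fin.strictMono_addNat k).injective
    (Fin.castLE_injective _) (isCompl_range_addNat_range_castLE m k) (toFinite _)

end ssum

/-- For the skew sum `π = σ ⊖ τ` of nonempty permutations: if the last entry of
`σ` is its smallest value then `sep π = sep σ + sep τ`, and otherwise
`sep π = sep σ + sep τ + 1`. -/
theorem sep_ssum {m k : ℕ} (hm : 1 ≤ m) (hk : 1 ≤ k)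
    (σ : Equiv.Perm (Fin m)) (τ : Equiv.Perm (Fin k)) :
    ((σ ⟨m - 1, by omega⟩ : ℕ) = 0 → sep (ssum σ τ) = sep σ + sep τ) ∧
    ((σ ⟨m - 1, by omega⟩ : ℕ) ≠ 0 → sep (ssum σ τ) = sep σ + sep τ + 1) := by
  obtain ⟨m, rfl⟩ := Nat.exists_eq_add_of_le' hm
  obtain ⟨k, rfl⟩ := Nat.exists_eq_add_of_le' hk
  change ((σ (Fin.last m) : ℕ) = 0 → _) ∧ ((σ (Fin.last m) : ℕ) ≠ 0 → _)
  simp only [sep_ssum_eq_sep_add_ncard, isSepPair_ssum_castLE, ne_eq, Fin.val_eq_zero_iff]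
  constructor
  · intro hσ
    simp only [hσ, not_true_eq_false, and_false, or_false, sep]
  · intro hσ
    have low_pairs : {v | IsSepPair τ v ∨ v = Fin.last k ∧ ¬ σ (Fin.last m) = 0} =
        insert (Fin.last k) {v | IsSepPair τ v} := by
      simp only [hσ, not_false_eq_true, and_true, or_comm, insert_def, mem_ofPred_eq]
    have last_notMem : Fin.last k ∉ {v | IsSepPair τ v} := not_isSepPair_last τ
    rw [low_pairs, ncard_insert_of_notMem last_notMem, ← sep, Nat.add_assoc]
end
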